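/- arXiv:math/0702627 — 2 statements merged into one kernel-verified Lean document; each statement's English description precedes it below -/
import Mathlib

section
/- Let G be a connected irregular graph on n vertices with maximum degree Δ, diameter D, and largest adjacency eigenvalue λ₁. Then Δ − λ₁ > 1/(nD). -/
open SimpleGraph Finset Matrix

/-!
With `q = Δ - deg` and `ε = Δ - μ`, an eigenvector of the adjacency matrix for `μ` is an eigenvector
of the Schrödinger operator `L + q` for `ε`, where `L` is the graph Laplacian, `q ≥ 0`, and `q ≥ 1`
at some vertex `t`. Its absolute value `y` satisfies `L y + q y ≤ ε y`. Let `y` be maximal at `s`.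

* Summing over all vertices kills `L y` and leaves `y t ≤ ε ∑ y`.
* Summing over a superlevel set of `y` leaves only nonnegative flows out of that set, so the drop of
  `y` along an edge is at most `ε (n - 1) y s`; for an edge at `s` the set `{s}` gives `ε y s`.

Adding the drops along a geodesic from `s` to `t` gives
`y s ≤ ε ((1 + (D - 1) (n - 1)) y s + ∑ y)`, which is less than `ε n D y s` as `D ≥ 2` and
`∑ y < n y s`; in the remaining case `y t = y s` the first bullet suffices.
-/

section Graph

variable {V : Type*} {G : SimpleGraph V}

lemma one_lt_diam_of_ne_top [Finite V] (hG : G.Connected) (hne : G ≠ ⊤) : 1 < G.diam := by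
  have : Nontrivial V := by
    by_contra h
    rw [not_nontrivial_iff_subsingleton] at h
    exact hne (Subsingleton.elim _ _)
  have h0 : G.diam ≠ 0 := connected_iff_diam_ne_zero.mp hG
  have h1 : G.diam ≠ 1 := mt diam_eq_one.mp hne
  lia

lemma ne_top_of_not_isRegularOfDegree [Fintype V] [DecidableRel G.Adj]
    (hG : ¬ ∃ d, G.IsRegularOfDegree d) : G ≠ ⊤ := by
  classical
  rintro rfl
  exact hG ⟨Fintype.card V - 1, by convert IsRegularOfDegree.top (V := V)⟩

lemma exists_degree_lt_of_not_isRegularOfDegree [G.LocallyFinite] {d : ℕ}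
    (hG : ¬ G.IsRegularOfDegree d) (hd : ∀ v, G.degree v ≤ d) : ∃ v, G.degree v < d := by
  by_contra! h
  exact hG fun v ↦ (hd v).antisymm (h v)

lemma sub_le_length_nsmul_of_forall_adj {α : Type*} [AddCommGroup α] [PartialOrder α]
    [IsOrderedAddMonoid α] {y : V → α} {c : α} (h : ∀ u v, G.Adj u v → y u - y v ≤ c)
    {u v : V} (p : G.Walk u v) : y u - y v ≤ p.length • c := by
  induction p with
  | nil => simp
  | @cons u v w huv p ih =>
    calc y u - y w = (y v - y w) + (y u - y v) := by abel
      _ ≤ p.length • c + c := add_le_add ih (h u v huv)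
      _ = (p.length + 1) • c := (succ_nsmul c p.length).symm

end Graph

section Laplacian

variable {V : Type*} [Fintype V] [DecidableEq V] {G : SimpleGraph V} [DecidableRel G.Adj]
  {R : Type*}

lemma lapMatrix_mulVec_eq_sum_sub [NonAssocRing R] (y : V → R) (i : V) :
    (G.lapMatrix R *ᵥ y) i = ∑ j ∈ G.neighborFinset i, (y i - y j) := by
  rw [lapMatrix_mulVec_apply, sum_sub_distrib, sum_const, card_neighborFinset_eq_degree,
    nsmul_eq_mul]

lemma sum_lapMatrix_mulVec [NonAssocRing R] (y : V → R) (S : Finset V) :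
    ∑ i ∈ S, (G.lapMatrix R *ᵥ y) i = ∑ i ∈ S, ∑ j ∈ G.neighborFinset i \ S, (y i - y j) := by
  have inner_edges_cancel : ∑ i ∈ S, ∑ j ∈ G.neighborFinset i ∩ S, (y i - y j) = 0 := by
    simp_rw [sum_sub_distrib]
    rw [sub_eq_zero]
    refine sum_comm' fun i j ↦ ?_
    simp only [mem_inter, mem_neighborFinset, G.adj_comm i j]
    tauto
  simp_rw [lapMatrix_mulVec_eq_sum_sub, ← sum_inter_add_sum_sdiff (G.neighborFinset _) S]
  rw [sum_add_distrib, inner_edges_cancel, zero_add]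

lemma sum_univ_lapMatrix_mulVec [NonAssocRing R] (y : V → R) :
    ∑ i, (G.lapMatrix R *ᵥ y) i = 0 := by
  simp [sum_lapMatrix_mulVec, sdiff_eq_empty_iff_subset.mpr (subset_univ _)]

lemma sub_le_sum_lapMatrix_mulVec [NonAssocRing R] [PartialOrder R] [IsOrderedAddMonoid R]
    {y : V → R} {S : Finset V} (hS : ∀ i ∈ S, ∀ j ∉ S, y j ≤ y i) {u v : V} (hu : u ∈ S)
    (hv : v ∉ S) (huv : G.Adj u v) : y u - y v ≤ ∑ i ∈ S, (G.lapMatrix R *ᵥ y) i := by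
  have outflow_nonneg : ∀ i ∈ S, ∀ j ∈ G.neighborFinset i \ S, 0 ≤ y i - y j := fun i hi j hj ↦
    sub_nonneg.mpr (hS i hi j (mem_sdiff.mp hj).2)
  calc y u - y v ≤ ∑ j ∈ G.neighborFinset u \ S, (y u - y j) :=
        single_le_sum (f := fun j ↦ y u - y j) (outflow_nonneg u hu) (by simp [huv, hv])
    _ ≤ ∑ i ∈ S, ∑ j ∈ G.neighborFinset i \ S, (y i - y j) :=
        single_le_sum (f := fun i ↦ ∑ j ∈ G.neighborFinset i \ S, (y i - y j))
          (fun i hi ↦ sum_nonneg (outflow_nonneg i hi)) hu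
    _ = ∑ i ∈ S, (G.lapMatrix R *ᵥ y) i := (sum_lapMatrix_mulVec y S).symm

lemma lapMatrix_add_diagonal_sub_degree [Ring R] (c : R) :
    G.lapMatrix R + diagonal (fun i ↦ c - G.degree i) = c • 1 - G.adjMatrix R := by
  rw [lapMatrix, degMatrix, smul_one_eq_diagonal, sub_add_eq_add_sub, diagonal_add]
  simp

lemma hasEigenvalue_lapMatrix_add_diagonal_sub_degree_iff [CommRing R] {c ε : R} :
    Module.End.HasEigenvalue (toLin' (G.lapMatrix R + diagonal fun i ↦ c - G.degree i)) ε ↔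
      Module.End.HasEigenvalue (toLin' (G.adjMatrix R)) (c - ε) := by
  rw [lapMatrix_add_diagonal_sub_degree, map_sub, map_smul, toLin'_one,
    Module.End.hasEigenvalue_sub'_iff]

end Laplacian

section Subsolution

variable {V : Type*} [Fintype V] [DecidableEq V] {G : SimpleGraph V} [DecidableRel G.Adj]
  {q y : V → ℝ} {ε : ℝ} {s t : V}

/-- A nonnegative subsolution `y` of the eigenvalue equation `L y + q y = ε y`, where `L` is the
Laplacian of `G` and `q` is a potential. It replaces an eigenvector of `L + q` by its absolute
value; `y = 0` is allowed. -/
structure IsSubsolution (G : SimpleGraph V) [DecidableRel G.Adj] (q : V → ℝ) (ε : ℝ)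
    (y : V → ℝ) : Prop where
  nonneg : ∀ i, 0 ≤ y i
  le : ∀ i, (G.lapMatrix ℝ *ᵥ y) i + q i * y i ≤ ε * y i

lemma isSubsolution_abs {x : V → ℝ} (hx : (G.lapMatrix ℝ + diagonal q) *ᵥ x = ε • x) :
    IsSubsolution G q ε |x| where
  nonneg i := abs_nonneg (x i)
  le i := by
    have hxi : (G.degree i + q i - ε) * x i = ∑ j ∈ G.neighborFinset i, x j := by
      have := congrFun hx i
      rw [add_mulVec, Pi.add_apply, lapMatrix_mulVec_apply, mulVec_diagonal, Pi.smul_apply,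
        smul_eq_mul] at this
      linarith
    have : (G.degree i + q i - ε) * |x i| ≤ ∑ j ∈ G.neighborFinset i, |x j| :=
      calc (G.degree i + q i - ε) * |x i| ≤ |(G.degree i + q i - ε) * x i| := by
            rw [abs_mul]; gcongr; exact le_abs_self _
        _ ≤ ∑ j ∈ G.neighborFinset i, |x j| := hxi ▸ abs_sum_le_sum_abs _ _
    simp only [lapMatrix_mulVec_apply, Pi.abs_apply]
    linarith

lemma exists_isSubsolution_of_hasEigenvalue
    (hε : Module.End.HasEigenvalue (toLin' (G.lapMatrix ℝ + diagonal q)) ε) :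
    ∃ y s, IsSubsolution G q ε y ∧ 0 < y s ∧ ∀ i, y i ≤ y s := by
  obtain ⟨x, hx⟩ := hε.exists_hasEigenvector
  obtain ⟨i, hi⟩ := Function.ne_iff.mp hx.2
  have : Nonempty V := ⟨i⟩
  obtain ⟨s, hs⟩ := Finite.exists_max |x|
  exact ⟨|x|, s, isSubsolution_abs hx.apply_eq_smul, (abs_pos.mpr hi).trans_le (hs i), hs⟩

namespace IsSubsolution

lemma lapMatrix_mulVec_le (h : IsSubsolution G q ε y) (hq : ∀ i, 0 ≤ q i) (i : V) :
    (G.lapMatrix ℝ *ᵥ y) i ≤ ε * y i :=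
  (le_add_of_nonneg_right (mul_nonneg (hq i) (h.nonneg i))).trans (h.le i)

lemma potential_mul_le (h : IsSubsolution G q ε y) (hq : ∀ i, 0 ≤ q i) (t : V) :
    q t * y t ≤ ε * ∑ i, y i :=
  calc q t * y t ≤ ∑ i, q i * y i :=
        single_le_sum (f := fun i ↦ q i * y i) (fun i _ ↦ mul_nonneg (hq i) (h.nonneg i))
          (mem_univ t)
    _ = ∑ i, ((G.lapMatrix ℝ *ᵥ y) i + q i * y i) := by
        rw [sum_add_distrib, sum_univ_lapMatrix_mulVec, zero_add]
    _ ≤ ∑ i, ε * y i := sum_le_sum fun i _ ↦ h.le i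
    _ = ε * ∑ i, y i := (mul_sum ..).symm

lemma eigenvalue_nonneg (h : IsSubsolution G q ε y) (hq : ∀ i, 0 ≤ q i) (hs : 0 < y s) :
    0 ≤ ε := by
  have sum_pos : 0 < ∑ i, y i := sum_pos' (fun i _ ↦ h.nonneg i) ⟨s, mem_univ s, hs⟩
  exact nonneg_of_mul_nonneg_left
    ((mul_nonneg (hq s) hs.le).trans (h.potential_mul_le hq s)) sum_pos

lemma sub_le_of_adj_max (h : IsSubsolution G q ε y) (hq : ∀ i, 0 ≤ q i) (hmax : ∀ i, y i ≤ y s)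
    {v : V} (hsv : G.Adj s v) : y s - y v ≤ ε * y s :=
  calc y s - y v ≤ ∑ i ∈ {s}, (G.lapMatrix ℝ *ᵥ y) i :=
        sub_le_sum_lapMatrix_mulVec (by simpa using fun j _ ↦ hmax j) (mem_singleton_self s)
          (notMem_singleton.mpr hsv.ne') hsv
    _ ≤ ε * y s := by simpa using h.lapMatrix_mulVec_le hq s

lemma sub_le_of_adj (h : IsSubsolution G q ε y) (hq : ∀ i, 0 ≤ q i) (hε : 0 ≤ ε)
    (hmax : ∀ i, y i ≤ y s) {u v : V} (huv : G.Adj u v) :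
    y u - y v ≤ ε * ((Fintype.card V - 1) * y s) := by
  have card_pos : (1 : ℝ) ≤ Fintype.card V := by exact_mod_cast Fintype.card_pos_iff.mpr ⟨s⟩
  rcases le_or_gt (y u) (y v) with hle | hlt
  · exact (sub_nonpos.mpr hle).trans
      (mul_nonneg hε (mul_nonneg (sub_nonneg.mpr card_pos) (h.nonneg s)))
  let S : Finset V := {w | y u ≤ y w}
  have hvS : v ∉ S := by simpa [S] using hlt
  have hS : ∀ i ∈ S, ∀ j ∉ S, y j ≤ y i := fun i hi j hj ↦ by
    simp only [S, mem_filter_univ, not_le] at hi hj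
    exact hj.le.trans hi
  have card_S_le : (#S : ℝ) ≤ Fintype.card V - 1 :=
    le_sub_iff_add_le.mpr (by exact_mod_cast card_lt_univ_of_notMem hvS)
  calc y u - y v ≤ ∑ i ∈ S, (G.lapMatrix ℝ *ᵥ y) i :=
        sub_le_sum_lapMatrix_mulVec hS (by simp [S]) hvS huv
    _ ≤ ∑ _ ∈ S, ε * y s := sum_le_sum fun i _ ↦
        (h.lapMatrix_mulVec_le hq i).trans (mul_le_mul_of_nonneg_left (hmax i) hε)
    _ = #S * (ε * y s) := by rw [sum_const, nsmul_eq_mul]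
    _ ≤ (Fintype.card V - 1) * (ε * y s) :=
        mul_le_mul_of_nonneg_right card_S_le (mul_nonneg hε (h.nonneg s))
    _ = ε * ((Fintype.card V - 1) * y s) := by ring

lemma sub_le_of_ne (h : IsSubsolution G q ε y) (hG : G.Connected) (hq : ∀ i, 0 ≤ q i)
    (hε : 0 ≤ ε) (hmax : ∀ i, y i ≤ y s) (hst : s ≠ t) :
    y s - y t ≤ ε * ((1 + (G.diam - 1) * (Fintype.card V - 1)) * y s) := by
  have : Nonempty V := ⟨s⟩
  obtain ⟨p, hp⟩ := hG.exists_walk_length_eq_dist s t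
  have p_le_diam : p.length ≤ G.diam := hp ▸ dist_le_diam (connected_iff_ediam_ne_top.mp hG)
  cases p with
  | nil => exact absurd rfl hst
  | @cons _ v _ hsv p =>
    have p_length_le : (p.length : ℝ) ≤ G.diam - 1 :=
      le_sub_iff_add_le.mpr (by exact_mod_cast p_le_diam)
    have card_pos : (1 : ℝ) ≤ Fintype.card V := by exact_mod_cast Fintype.card_pos
    have edge_drop_nonneg : 0 ≤ ε * ((Fintype.card V - 1) * y s) :=
      mul_nonneg hε (mul_nonneg (sub_nonneg.mpr card_pos) (h.nonneg s))
    calc y s - y t = (y s - y v) + (y v - y t) := by ring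
      _ ≤ ε * y s + p.length • (ε * ((Fintype.card V - 1) * y s)) :=
          add_le_add (h.sub_le_of_adj_max hq hmax hsv)
            (sub_le_length_nsmul_of_forall_adj (fun _ _ ↦ h.sub_le_of_adj hq hε hmax) p)
      _ ≤ ε * y s + (G.diam - 1) * (ε * ((Fintype.card V - 1) * y s)) := by
          rw [nsmul_eq_mul]; gcongr
      _ = ε * ((1 + (G.diam - 1) * (Fintype.card V - 1)) * y s) := by ring

lemma lt_eigenvalue_mul (h : IsSubsolution G q ε y) (hG : G.Connected) (hne : G ≠ ⊤)
    (hq : ∀ i, 0 ≤ q i) (ht : 1 ≤ q t) (hs : 0 < y s) (hmax : ∀ i, y i ≤ y s) :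
    y s < ε * (Fintype.card V * G.diam * y s) := by
  have hε : 0 ≤ ε := h.eigenvalue_nonneg hq hs
  have two_le_diam : (2 : ℝ) ≤ G.diam := by exact_mod_cast one_lt_diam_of_ne_top hG hne
  have card_mul_eq : ∑ _i : V, y s = Fintype.card V * y s := by simp
  have hyt : y t ≤ ε * ∑ i, y i :=
    (le_mul_of_one_le_left (h.nonneg t) ht).trans (h.potential_mul_le hq t)
  rcases (hmax t).eq_or_lt with hts | hts
  · have hle : y s ≤ ε * (Fintype.card V * y s) :=
      calc y s ≤ ε * ∑ i, y i := hts ▸ hyt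
        _ ≤ ε * (Fintype.card V * y s) := by
            rw [← card_mul_eq]; gcongr with i; exact hmax i
    calc y s < 2 * (ε * (Fintype.card V * y s)) := by linarith
      _ ≤ G.diam * (ε * (Fintype.card V * y s)) := by gcongr
      _ = ε * (Fintype.card V * G.diam * y s) := by ring
  · have sum_lt : ∑ i, y i < Fintype.card V * y s :=
      card_mul_eq ▸ sum_lt_sum (fun i _ ↦ hmax i) ⟨t, mem_univ t, hts⟩
    have hle : y s ≤
        ε * ((1 + (G.diam - 1) * (Fintype.card V - 1)) * y s + ∑ i, y i) := by
      have := h.sub_le_of_ne hG hq hε hmax (ne_of_apply_ne y hts.ne')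
      linarith
    have hε_pos : 0 < ε := hε.lt_of_ne (by rintro rfl; linarith)
    refine hle.trans_lt (mul_lt_mul_of_pos_left ?_ hε_pos)
    have slack : 0 ≤ (G.diam - 2) * y s := mul_nonneg (sub_nonneg.mpr two_le_diam) hs.le
    linarith

end IsSubsolution

end Subsolution

theorem stmt3_general {V : Type*} [Fintype V] [DecidableEq V] {G : SimpleGraph V}
    [DecidableRel G.Adj] (hG : G.Connected) (hne : G ≠ ⊤) {q : V → ℝ} (hq : ∀ i, 0 ≤ q i)
    {t : V} (ht : 1 ≤ q t) {ε : ℝ}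
    (hε : Module.End.HasEigenvalue (toLin' (G.lapMatrix ℝ + diagonal q)) ε) :
    1 / (Fintype.card V * G.diam) < ε := by
  obtain ⟨y, s, hy, hs, hmax⟩ := exists_isSubsolution_of_hasEigenvalue hε
  have hlt := hy.lt_eigenvalue_mul hG hne hq ht hs hmax
  rw [← mul_assoc, lt_mul_iff_one_lt_left hs] at hlt
  have : Nonempty V := ⟨s⟩
  have diam_pos : 0 < G.diam := zero_lt_one.trans (one_lt_diam_of_ne_top hG hne)
  have card_mul_diam_pos : (0 : ℝ) < Fintype.card V * G.diam := by
    exact_mod_cast Nat.mul_pos Fintype.card_pos diam_pos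
  rwa [div_lt_iff₀ card_mul_diam_pos]

/-- Main theorem: if `G` is a connected irregular graph on `n` vertices with maximum degree
`Δ`, diameter `D` and largest adjacency eigenvalue `μ`, then `Δ − μ > 1/(nD)`. -/
theorem stmt3 {V : Type*} [Fintype V] [DecidableEq V]
    (G : SimpleGraph V) [DecidableRel G.Adj]
    (hconn : G.Connected)
    (hirr : ¬ ∃ d, G.IsRegularOfDegree d)
    (Δ : ℕ) (hΔ : ∀ i, G.degree i ≤ Δ) (hΔex : ∃ i, G.degree i = Δ)
    (μ : ℝ)
    (hμ : Module.End.HasEigenvalue (Matrix.toLin' (G.adjMatrix ℝ)) μ)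
    (hμmax : ∀ ν : ℝ, Module.End.HasEigenvalue (Matrix.toLin' (G.adjMatrix ℝ)) ν → ν ≤ μ) :
    (Δ : ℝ) - μ > 1 / (Fintype.card V * G.diam) := by
  obtain ⟨t, ht⟩ := exists_degree_lt_of_not_isRegularOfDegree (not_exists.mp hirr Δ) hΔ
  have gap_hasEigenvalue : Module.End.HasEigenvalue
      (toLin' (G.lapMatrix ℝ + diagonal fun i ↦ (Δ : ℝ) - G.degree i)) (Δ - μ) := by
    rwa [hasEigenvalue_lapMatrix_add_diagonal_sub_degree_iff, sub_sub_cancel]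
  exact stmt3_general hconn (ne_top_of_not_isRegularOfDegree hirr)
    (fun i ↦ sub_nonneg.mpr (by exact_mod_cast hΔ i))
    (le_sub_iff_add_le'.mpr (by exact_mod_cast ht)) gap_hasEigenvalue
end

section
/- Let G be a graph obtained from a connected Δ-regular graph on n vertices, with Δ ≥ cn for a constant c > 0, by deleting one edge so that G remains connected. Then Δ − λ₁(G) ≥ 1/(nD) > c'/n for a constant c' > 0 depending only on c; combined with Δ − λ₁(G) < 2/n, this gives Δ − λ₁(G) = Θ(1/n). -/
open SimpleGraph Finset Matrix

/-!
Let `G` have `n` vertices, diameter `D` and degrees at most `Δ`. Let `x` be an eigenvector of its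
adjacency matrix for `μ`, and let `w` be a vertex at which `x ^ 2` is largest. Pairing the
eigenvalue equation with `x` gives
`∑_{ab ∈ E} (x a - x b) ^ 2 + ∑_a (Δ - deg a) * x a ^ 2 = (Δ - μ) * ∑_a x a ^ 2`.
If distinct vertices `u` and `v` have degree less than `Δ`, the left side is at least `x w ^ 2 / D`.
When `u` or `v` is at distance less than `D` from `w`, this is Cauchy–Schwarz along a geodesic to
it; otherwise both are at distance `D`, and one averages over two geodesics, whose last edges are
distinct. The right side is at most `(Δ - μ) * n * x w ^ 2`.

The diameter is bounded because closed neighbourhoods of vertices at distances `0, 3, 6, …` from an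
end of a diametral geodesic are disjoint. The upper bound on `Δ - μ` is the Rayleigh quotient of
the all-ones vector, which is not an eigenvector since `G` is not regular.
-/

section SquaredDifferences

variable {V : Type*} {G : SimpleGraph V}

/-- The function `ab ↦ (x a - x b) ^ 2` on unordered pairs. Its sum over the edges of a graph is
the Dirichlet energy of `x`, i.e. the quadratic form of the Laplacian. -/
def sqDiff (x : V → ℝ) : Sym2 V → ℝ :=
  Sym2.lift ⟨fun a b => (x a - x b) ^ 2, fun _ _ => sub_sq_comm _ _⟩

lemma sqDiff_mk (x : V → ℝ) (a b : V) : sqDiff x s(a, b) = (x a - x b) ^ 2 := rfl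

lemma sqDiff_nonneg (x : V → ℝ) (e : Sym2 V) : 0 ≤ sqDiff x e := by
  cases e
  exact sq_nonneg _

lemma add_sq_le_add_one_mul_of_sq_le_mul {s t k T : ℝ} (hk : 0 < k) (h : t ^ 2 ≤ k * T) :
    (s + t) ^ 2 ≤ (k + 1) * (s ^ 2 + T) := by
  refine le_of_mul_le_mul_left ?_ hk
  nlinarith [sq_nonneg (k * s - t)]

lemma sq_le_length_add_one_mul (x : V → ℝ) {a b : V} (p : G.Walk a b) :
    x a ^ 2 ≤ (p.length + 1) * ((p.edges.map (sqDiff x)).sum + x b ^ 2) := by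
  induction p with
  | nil => simp
  | @cons a b c _ p ih =>
    have h := add_sq_le_add_one_mul_of_sq_le_mul (s := x a - x b) (by positivity) ih
    simpa only [sub_add_cancel, ← add_assoc, Walk.length_cons, Nat.cast_add, Nat.cast_one,
      Walk.edges_cons, List.map_cons, List.sum_cons, sqDiff_mk] using h

lemma sq_le_length_add_one_mul_sum (x : V → ℝ) {a b : V} {p : G.Walk a b}
    (hp : p.IsTrail) {S : Finset (Sym2 V)} (hS : ∀ e ∈ p.edges, e ∈ S) :
    x a ^ 2 ≤ (p.length + 1) * (∑ e ∈ S, sqDiff x e + x b ^ 2) := by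
  classical
  refine (sq_le_length_add_one_mul x p).trans ?_
  rw [← List.sum_toFinset _ hp.edges_nodup]
  gcongr
  exacts [fun _ _ _ => sqDiff_nonneg x _, fun e he => hS e (List.mem_toFinset.1 he)]

lemma sum_sum_adj_eq_two_nsmul_sum_edgeFinset [Fintype V] [DecidableRel G.Adj]
    {M : Type*} [AddCommMonoid M] (f : Sym2 V → M) :
    (∑ a, ∑ b, if G.Adj a b then f s(a, b) else 0) = 2 • ∑ e ∈ G.edgeFinset, f e := by
  classical
  calc (∑ a, ∑ b, if G.Adj a b then f s(a, b) else 0)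
      = ∑ p : V × V with G.Adj p.1 p.2, f s(p.1, p.2) := by
        rw [sum_filter, Fintype.sum_prod_type]
    _ = ∑ d : G.Dart, f d.edge :=
        sum_bij' (fun p hp => ⟨p, (mem_filter.1 hp).2⟩) (fun d _ => d.toProd)
          (by simp) (by simp) (by simp) (by simp) (by simp)
    _ = ∑ e ∈ G.edgeFinset, ∑ d : G.Dart with d.edge = e, f d.edge :=
        (sum_fiberwise_of_maps_to (fun d _ => mem_edgeFinset.2 d.edge_mem) _).symm
    _ = ∑ e ∈ G.edgeFinset, 2 • f e := by
        refine sum_congr rfl fun e he => ?_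
        rw [← G.dart_edge_fiber_card e (mem_edgeFinset.1 he), ← sum_const]
        exact sum_congr rfl fun d hd => congrArg f (mem_filter.1 hd).2
    _ = 2 • ∑ e ∈ G.edgeFinset, f e := (smul_sum ..).symm

lemma dotProduct_lapMatrix_mulVec_eq_sum_sqDiff [Fintype V] [DecidableEq V] [DecidableRel G.Adj]
    (x : V → ℝ) : x ⬝ᵥ G.lapMatrix ℝ *ᵥ x = ∑ e ∈ G.edgeFinset, sqDiff x e := by
  have h := G.lapMatrix_toLinearMap₂' ℝ x
  simp only [← sqDiff_mk, sum_sum_adj_eq_two_nsmul_sum_edgeFinset] at h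
  rw [← toLinearMap₂'_apply', h, two_nsmul, add_self_div_two]

end SquaredDifferences

section Distance

variable {V : Type*} {G : SimpleGraph V}

lemma exists_dist_eq_and_dist_eq (hG : G.Connected) {a b : V} {k l : ℕ}
    (h : G.dist a b = k + l) : ∃ c, G.dist a c = k ∧ G.dist c b = l := by
  obtain ⟨p, hp⟩ := hG.exists_walk_length_eq_dist a b
  have h₁ := G.dist_le (p.take k)
  have h₂ := G.dist_le (p.drop k)
  have h₃ := hG.dist_triangle (u := a) (v := p.getVert k) (w := b)
  rw [Walk.take_length] at h₁
  rw [Walk.drop_length] at h₂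
  exact ⟨p.getVert k, by omega, by omega⟩

lemma dist_le_dist_of_mem_support {a b c : V} {p : G.Walk a b} (hp : p.length = G.dist a b)
    (hc : c ∈ p.support) : G.dist a c ≤ G.dist a b := by
  classical
  exact hp ▸ (dist_le _).trans (p.length_takeUntil_le_length hc)

lemma diam_mul_lt_three_mul_card [Fintype V] [DecidableRel G.Adj] (hG : G.Connected)
    {d : ℕ} (hd : ∀ a, d ≤ G.degree a + 1) : G.diam * d < 3 * Fintype.card V := by
  classical
  have := hG.nonempty
  obtain ⟨s, t, hst⟩ := G.exists_dist_eq_diam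
  let block (a : V) : ℕ := (G.dist s a + 1) / 3
  have le_card_block : ∀ i ∈ range (G.diam / 3 + 1), d ≤ #{a | block a = i} := by
    intro i hi
    obtain ⟨a, ha, -⟩ := exists_dist_eq_and_dist_eq (a := s) (b := t) (k := 3 * i)
      (l := G.diam - 3 * i) hG (by grind)
    have subset_block : insert a (G.neighborFinset a) ⊆ univ.filter (block · = i) := by
      intro b hb
      obtain rfl | hab : b = a ∨ G.Adj a b := by simpa using hb
      · simp only [mem_filter, mem_univ, true_and, block]
        omega
      · have := hab.diff_dist_adj (u := s)
        simp only [mem_filter, mem_univ, true_and, block]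
        omega
    calc d ≤ #(insert a (G.neighborFinset a)) := by simpa using hd a
      _ ≤ #{b | block b = i} := card_le_card subset_block
  have mul_le_card : (G.diam / 3 + 1) * d ≤ Fintype.card V := by
    by_contra! hlt
    obtain ⟨i, hi, hcard⟩ := exists_card_fiber_lt_of_card_lt_mul (s := univ) (f := block)
      (t := range (G.diam / 3 + 1)) (n := d) (by simpa using hlt)
    exact (le_card_block i hi).not_gt hcard
  obtain rfl | hd_pos := d.eq_zero_or_pos
  · simp [Fintype.card_pos]
  calc G.diam * d < 3 * (G.diam / 3 + 1) * d := Nat.mul_lt_mul_of_pos_right (by omega) hd_pos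
    _ = 3 * ((G.diam / 3 + 1) * d) := mul_assoc ..
    _ ≤ 3 * Fintype.card V := Nat.mul_le_mul_left 3 mul_le_card

lemma div_card_lt_one_div_card_mul_diam [Fintype V] [Nontrivial V] [DecidableRel G.Adj]
    (hG : G.Connected) {d : ℕ} (hd : ∀ a, d ≤ G.degree a + 1) {c : ℝ}
    (hc : c * Fintype.card V ≤ d) :
    c / 3 / Fintype.card V < 1 / (Fintype.card V * G.diam) := by
  have card_pos : (0 : ℝ) < Fintype.card V := Nat.cast_pos.2 Fintype.card_pos
  have diam_pos : (0 : ℝ) < G.diam :=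
    Nat.cast_pos.2 (Nat.pos_of_ne_zero (connected_iff_diam_ne_zero.1 hG))
  have mul_diam_lt : c * G.diam * Fintype.card V < 3 * Fintype.card V :=
    calc c * G.diam * Fintype.card V = G.diam * (c * Fintype.card V) := by ring
      _ ≤ G.diam * d := by gcongr
      _ < 3 * Fintype.card V := by exact_mod_cast diam_mul_lt_three_mul_card hG hd
  have : c * G.diam < 3 := lt_of_mul_lt_mul_right mul_diam_lt card_pos.le
  rw [div_div, div_lt_div_iff₀ (by positivity) (by positivity)]
  nlinarith

end Distance

section Energy

variable {V : Type*} {G : SimpleGraph V}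

lemma sq_le_mul_sum_sqDiff_add_sq_of_dist_lt (hG : G.Connected) (x : V → ℝ) {w a : V} {D : ℕ}
    (ha : G.dist w a < D) {S : Finset (Sym2 V)}
    (hS : ∀ e ∈ G.edgeSet, (∀ b ∈ e, G.dist w b < D) → e ∈ S) :
    x w ^ 2 ≤ D * (∑ e ∈ S, sqDiff x e + x a ^ 2) := by
  obtain ⟨p, hp, hlen⟩ := hG.exists_path_of_dist w a
  have hpS : ∀ e ∈ p.edges, e ∈ S := fun e he =>
    hS e (p.edges_subset_edgeSet he) fun b hb =>
      (dist_le_dist_of_mem_support hlen (p.mem_support_of_mem_edges he hb)).trans_lt ha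
  refine (sq_le_length_add_one_mul_sum x hp.isTrail hpS).trans ?_
  have := sum_nonneg fun e (_ : e ∈ S) => sqDiff_nonneg x e
  gcongr
  rw [hlen]
  exact_mod_cast ha

lemma exists_adj_and_dist_lt (hG : G.Connected) {w a : V} (hwa : w ≠ a) :
    ∃ b, G.Adj a b ∧ G.dist w b < G.dist w a := by
  have hpos := hG.pos_dist_of_ne hwa
  obtain ⟨b, hwb, hba⟩ := exists_dist_eq_and_dist_eq (k := G.dist w a - 1) (l := 1) hG
    (Nat.sub_add_cancel hpos).symm
  exact ⟨b, (dist_eq_one_iff_adj.1 hba).symm, by omega⟩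

lemma sq_le_mul_sum_sqDiff_add_sq_add_sq_of_dist_eq [Fintype G.edgeSet] (hG : G.Connected)
    (x : V → ℝ) {u v w : V} (huv : u ≠ v) (hdist : G.dist w u = G.dist w v) :
    x w ^ 2 ≤ G.dist w u * (∑ e ∈ G.edgeFinset, sqDiff x e + x u ^ 2 + x v ^ 2) := by
  classical
  have hwu : w ≠ u := by
    rintro rfl
    exact huv (hG.dist_eq_zero_iff.1 (by rw [← hdist, dist_self]))
  have hwv : w ≠ v := by
    rintro rfl
    exact huv (hG.dist_eq_zero_iff.1 (by rw [dist_comm, hdist, dist_self]))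
  obtain ⟨u', huu', hu'⟩ := exists_adj_and_dist_lt hG hwu
  obtain ⟨v', hvv', hv'⟩ := exists_adj_and_dist_lt hG hwv
  let S := G.edgeFinset \ {s(u, u'), s(v, v')}
  have last_edges_ne : s(u, u') ≠ s(v, v') := by
    rw [Ne, Sym2.eq_iff]
    rintro (⟨h, -⟩ | ⟨-, h⟩)
    · exact huv h
    · subst h
      omega
  have sum_eq : ∑ e ∈ G.edgeFinset, sqDiff x e =
      ∑ e ∈ S, sqDiff x e + ((x u - x u') ^ 2 + (x v - x v') ^ 2) := by
    rw [← sqDiff_mk, ← sqDiff_mk, ← sum_pair last_edges_ne, sum_sdiff]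
    simp [insert_subset_iff, huu', hvv']
  have mem_S : ∀ e ∈ G.edgeSet, (∀ b ∈ e, G.dist w b < G.dist w u) → e ∈ S := by
    intro e he hlt
    have hu : u ∉ e := fun h => (hlt u h).false
    have hv : v ∉ e := fun h => (hlt v h).ne hdist.symm
    simp only [S, mem_sdiff, mem_edgeFinset, mem_insert, mem_singleton]
    refine ⟨he, ?_⟩
    rintro (rfl | rfl)
    exacts [hu (Sym2.mem_mk_left ..), hv (Sym2.mem_mk_left ..)]
  have via_u' := sq_le_mul_sum_sqDiff_add_sq_of_dist_lt hG x hu' mem_S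
  have via_v' := sq_le_mul_sum_sqDiff_add_sq_of_dist_lt hG x (hdist ▸ hv') mem_S
  have sq_le (a a' : V) : x a' ^ 2 / 2 ≤ (x a - x a') ^ 2 + x a ^ 2 := by
    linarith [sq_nonneg (2 * x a - x a')]
  calc x w ^ 2 ≤ G.dist w u * (∑ e ∈ S, sqDiff x e + (x u' ^ 2 + x v' ^ 2) / 2) := by linarith
    _ ≤ G.dist w u * (∑ e ∈ G.edgeFinset, sqDiff x e + x u ^ 2 + x v ^ 2) := by
      rw [sum_eq]
      refine mul_le_mul_of_nonneg_left ?_ (Nat.cast_nonneg _)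
      linarith [sq_le u u', sq_le v v']

lemma sq_le_mul_sum_sqDiff_add_sq_add_sq [Fintype G.edgeSet] (hG : G.Connected) (x : V → ℝ)
    {u v w : V} (huv : u ≠ v) {D : ℕ} (hu : G.dist w u ≤ D) (hv : G.dist w v ≤ D) :
    x w ^ 2 ≤ D * (∑ e ∈ G.edgeFinset, sqDiff x e + x u ^ 2 + x v ^ 2) := by
  have near {a : V} (ha : G.dist w a < D) :
      x w ^ 2 ≤ D * (∑ e ∈ G.edgeFinset, sqDiff x e + x a ^ 2) :=
    sq_le_mul_sum_sqDiff_add_sq_of_dist_lt hG x ha fun _ he _ => mem_edgeFinset.2 he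
  obtain hu | rfl := hu.lt_or_eq
  · refine (near hu).trans (mul_le_mul_of_nonneg_left ?_ D.cast_nonneg)
    linarith [sq_nonneg (x v)]
  obtain hv | hv := hv.lt_or_eq
  · refine (near hv).trans (mul_le_mul_of_nonneg_left ?_ (Nat.cast_nonneg _))
    linarith [sq_nonneg (x u)]
  · exact sq_le_mul_sum_sqDiff_add_sq_add_sq_of_dist_eq hG x huv hv.symm

end Energy

section Spectrum

variable {V : Type*} [Fintype V] {G : SimpleGraph V} [DecidableRel G.Adj]

lemma sum_sqDiff_add_sum_sub_degree_mul_sq {x : V → ℝ} {μ : ℝ}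
    (hx : G.adjMatrix ℝ *ᵥ x = μ • x) (d : ℝ) :
    ∑ e ∈ G.edgeFinset, sqDiff x e + ∑ a, (d - G.degree a) * x a ^ 2 =
      (d - μ) * ∑ a, x a ^ 2 := by
  classical
  rw [← dotProduct_lapMatrix_mulVec_eq_sum_sqDiff, lapMatrix, sub_mulVec, dotProduct_sub,
    dotProduct_mulVec_degMatrix, hx]
  simp only [dotProduct, Pi.smul_apply, smul_eq_mul, mul_sum, ← sum_sub_distrib, ← sum_add_distrib]
  exact sum_congr rfl fun a _ => by ring

lemma sq_add_sq_le_sum_sub_degree_mul_sq {Δ : ℕ} (hΔ : ∀ a, G.degree a ≤ Δ) {u v : V}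
    (huv : u ≠ v) (hu : G.degree u < Δ) (hv : G.degree v < Δ) (x : V → ℝ) :
    x u ^ 2 + x v ^ 2 ≤ ∑ a, ((Δ : ℝ) - G.degree a) * x a ^ 2 := by
  classical
  have one_le {a : V} (ha : G.degree a < Δ) : 1 ≤ (Δ : ℝ) - G.degree a := by
    rw [le_sub_iff_add_le']
    exact_mod_cast ha
  calc x u ^ 2 + x v ^ 2
      ≤ ((Δ : ℝ) - G.degree u) * x u ^ 2 + ((Δ : ℝ) - G.degree v) * x v ^ 2 :=
        add_le_add (le_mul_of_one_le_left (sq_nonneg _) (one_le hu))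
          (le_mul_of_one_le_left (sq_nonneg _) (one_le hv))
    _ = ∑ a ∈ {u, v}, ((Δ : ℝ) - G.degree a) * x a ^ 2 := by
        rw [sum_pair huv]
    _ ≤ ∑ a, ((Δ : ℝ) - G.degree a) * x a ^ 2 :=
        sum_le_sum_of_subset_of_nonneg (subset_univ _) fun a _ _ =>
          mul_nonneg (sub_nonneg.2 (Nat.cast_le.2 (hΔ a))) (sq_nonneg _)

lemma one_div_card_mul_diam_le_sub_eigenvalue [DecidableEq V] (hG : G.Connected) {Δ : ℕ}
    (hΔ : ∀ a, G.degree a ≤ Δ) {u v : V} (huv : u ≠ v) (hu : G.degree u < Δ)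
    (hv : G.degree v < Δ) {μ : ℝ}
    (hμ : Module.End.HasEigenvalue (toLin' (G.adjMatrix ℝ)) μ) :
    1 / (Fintype.card V * G.diam) ≤ Δ - μ := by
  obtain ⟨x, hx⟩ := hμ.exists_hasEigenvector
  have hμx : G.adjMatrix ℝ *ᵥ x = μ • x := by simpa using hx.apply_eq_smul
  have := hG.nonempty
  obtain ⟨w, hw⟩ := Finite.exists_max fun a => x a ^ 2
  have dist_le (a : V) : G.dist w a ≤ G.diam := dist_le_diam (connected_iff_ediam_ne_top.1 hG)
  have sum_pos : 0 < ∑ a, x a ^ 2 := by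
    obtain ⟨a, ha⟩ := Function.ne_iff.1 hx.2
    exact sum_pos' (fun _ _ => sq_nonneg _) ⟨a, mem_univ a, sq_pos_of_ne_zero ha⟩
  have energy_le : ∑ e ∈ G.edgeFinset, sqDiff x e + x u ^ 2 + x v ^ 2 ≤
      (Δ - μ) * ∑ a, x a ^ 2 := by
    rw [← sum_sqDiff_add_sum_sub_degree_mul_sq hμx, add_assoc]
    gcongr
    exact sq_add_sq_le_sum_sub_degree_mul_sq hΔ huv hu hv x
  have sum_le : ∑ a, x a ^ 2 ≤ Fintype.card V * G.diam * (Δ - μ) * ∑ a, x a ^ 2 :=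
    calc ∑ a, x a ^ 2 ≤ Fintype.card V * x w ^ 2 := by
          simpa using sum_le_card_nsmul univ (fun a => x a ^ 2) _ fun a _ => hw a
      _ ≤ Fintype.card V * (G.diam *
            (∑ e ∈ G.edgeFinset, sqDiff x e + x u ^ 2 + x v ^ 2)) := by
          gcongr
          exact sq_le_mul_sum_sqDiff_add_sq_add_sq hG x huv (dist_le u) (dist_le v)
      _ ≤ Fintype.card V * (G.diam * ((Δ - μ) * ∑ a, x a ^ 2)) := by gcongr
      _ = Fintype.card V * G.diam * (Δ - μ) * ∑ a, x a ^ 2 := by ring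
  have one_le : 1 ≤ Fintype.card V * G.diam * (Δ - μ) :=
    le_of_mul_le_mul_right (by rwa [one_mul]) sum_pos
  have : Nontrivial V := ⟨u, v, huv⟩
  have card_mul_diam_pos : 0 < (Fintype.card V * G.diam : ℝ) := by
    have := Nat.pos_of_ne_zero (connected_iff_diam_ne_zero.1 hG)
    positivity
  rwa [div_le_iff₀' card_mul_diam_pos]

open scoped MatrixOrder in
lemma sum_degree_lt_card_mul_of_spectrum_le [DecidableEq V] {μ : ℝ}
    (hμ : ∀ ν ∈ spectrum ℝ (G.adjMatrix ℝ), ν ≤ μ) {a b : V} (hab : G.degree a ≠ G.degree b) :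
    ∑ c, (G.degree c : ℝ) < Fintype.card V * μ := by
  set B := algebraMap ℝ (Matrix V V ℝ) μ - G.adjMatrix ℝ
  have hB : B.PosSemidef :=
    Matrix.le_iff.1 (le_algebraMap_of_spectrum_le hμ (G.isHermitian_adjMatrix ℝ))
  have mulVec_one : B *ᵥ 1 = fun c => μ - G.degree c := by
    ext c
    simp [B, sub_mulVec, Algebra.algebraMap_eq_smul_one, smul_mulVec, adjMatrix_mulVec_apply]
  have rayleigh : star 1 ⬝ᵥ B *ᵥ 1 = Fintype.card V * μ - ∑ c, (G.degree c : ℝ) := by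
    simp [mulVec_one, dotProduct]
  have one_not_eigenvector : B *ᵥ 1 ≠ 0 := by
    intro h
    rw [mulVec_one] at h
    have degree_eq (c : V) : (G.degree c : ℝ) = μ := (sub_eq_zero.1 (congrFun h c)).symm
    exact hab (by exact_mod_cast (degree_eq a).trans (degree_eq b).symm)
  have pos := (hB.dotProduct_mulVec_nonneg 1).lt_of_ne'
    (mt (hB.dotProduct_mulVec_zero_iff 1).1 one_not_eigenvector)
  rwa [rayleigh, sub_pos] at pos

end Spectrum

section DeleteEdge

variable {V : Type*} {G : SimpleGraph V} {e : Sym2 V}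

lemma degree_deleteEdges_singleton_add [Fintype V] [DecidableEq V] [DecidableRel G.Adj]
    [DecidableRel (G.deleteEdges {e}).Adj] (he : e ∈ G.edgeSet) (a : V) :
    (G.deleteEdges {e}).degree a + (if a ∈ e then 1 else 0) = G.degree a := by
  have incidenceFinset_eq :
      (G.deleteEdges {e}).incidenceFinset a = (G.incidenceFinset a).erase e := by
    ext f
    simp only [mem_incidenceFinset, incidenceSet, edgeSet_deleteEdges, mem_erase]
    grind
  have mem_iff : e ∈ G.incidenceFinset a ↔ a ∈ e := by
    simp [mem_incidenceFinset, incidenceSet, he]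
  rw [← card_incidenceFinset_eq_degree, ← card_incidenceFinset_eq_degree, incidenceFinset_eq]
  split_ifs with hae
  · exact card_erase_add_one (mem_iff.2 hae)
  · rw [erase_eq_of_notMem (mt mem_iff.1 hae), add_zero]

lemma toFinset_ne_univ_of_connected_deleteEdges [Fintype V] [DecidableEq V] (he : e ∈ G.edgeSet)
    (hconn : (G.deleteEdges {e}).Connected) : e.toFinset ≠ univ := by
  induction e with | _ u v
  have : Nontrivial V := ⟨u, v, G.ne_of_adj he⟩
  obtain ⟨a, hua⟩ := hconn.preconnected.exists_adj_of_nontrivial u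
  have hav : a ≠ v := by
    rintro rfl
    simp at hua
  intro h
  simpa [hua.ne', hav] using eq_univ_iff_forall.1 h a

end DeleteEdge

theorem stmt18_general {V : Type*} [Fintype V] [DecidableEq V] {G : SimpleGraph V}
    [DecidableRel G.Adj] (hG : G.Connected) {Δ : ℕ} {S : Finset V} (hS : S.Nontrivial)
    (hS_ne : S ≠ univ) (hdeg : ∀ a, G.degree a + (if a ∈ S then 1 else 0) = Δ) {c : ℝ}
    (hc : c * Fintype.card V ≤ Δ) {μ : ℝ}
    (hμ : Module.End.HasEigenvalue (toLin' (G.adjMatrix ℝ)) μ)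
    (hmax : ∀ ν : ℝ, Module.End.HasEigenvalue (toLin' (G.adjMatrix ℝ)) ν → ν ≤ μ) :
    1 / (Fintype.card V * G.diam) ≤ Δ - μ ∧
      c / 3 / Fintype.card V < 1 / (Fintype.card V * G.diam) ∧
      Δ - μ < #S / Fintype.card V := by
  obtain ⟨u, hu, v, hv, huv⟩ := hS
  obtain ⟨a, ha⟩ := not_forall.1 (mt eq_univ_iff_forall.2 hS_ne)
  have degree_lt {b : V} (hb : b ∈ S) : G.degree b < Δ := by grind
  have : Nontrivial V := ⟨u, v, huv⟩
  have degree_le (b : V) : G.degree b ≤ Δ := by grind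
  have le_degree_add_one (b : V) : Δ ≤ G.degree b + 1 := by grind
  refine ⟨one_div_card_mul_diam_le_sub_eigenvalue hG degree_le huv (degree_lt hu) (degree_lt hv)
    hμ, div_card_lt_one_div_card_mul_diam hG le_degree_add_one hc, ?_⟩
  have spectrum_le : ∀ ν ∈ spectrum ℝ (G.adjMatrix ℝ), ν ≤ μ := fun ν hν =>
    hmax ν (.of_mem_spectrum (by rwa [spectrum_toLin']))
  have degree_ne : G.degree u ≠ G.degree a := by grind
  have sum_lt := sum_degree_lt_card_mul_of_spectrum_le spectrum_le degree_ne
  have sum_degree : ∑ b, (G.degree b : ℝ) + #S = Fintype.card V * Δ := by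
    have : ∑ b, G.degree b + #S = Fintype.card V * Δ := by
      simpa [sum_add_distrib] using sum_congr rfl fun b (_ : b ∈ univ) => hdeg b
    exact_mod_cast this
  rw [lt_div_iff₀ (Nat.cast_pos.2 Fintype.card_pos)]
  linarith

/-- Let `G` be obtained from a connected `Δ`-regular graph on `n` vertices with `Δ ≥ cn`
(`c > 0` a constant) by deleting one edge, so that `G` stays connected. Then
`Δ − λ₁(G) ≥ 1/(nD) > c'/n` for a constant `c' > 0` depending only on `c`, and combined
with `Δ − λ₁(G) < 2/n` this gives `Δ − λ₁(G) = Θ(1/n)`. -/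
theorem stmt18 (c : ℝ) (hc : 0 < c) :
    ∃ c' : ℝ, 0 < c' ∧
      ∀ (V : Type) (_ : Fintype V) (_ : DecidableEq V)
        (G' : SimpleGraph V) (_ : DecidableRel G'.Adj)
        (_ : G'.Connected)
        (Δ : ℕ) (_ : G'.IsRegularOfDegree Δ)
        (_ : (Δ : ℝ) ≥ c * Fintype.card V)
        (e : Sym2 V) (_ : e ∈ G'.edgeSet)
        (G : SimpleGraph V) (_ : G = G'.deleteEdges {e}) (_ : DecidableRel G.Adj)
        (_ : G.Connected)
        (μ : ℝ)
        (_ : Module.End.HasEigenvalue (Matrix.toLin' (G.adjMatrix ℝ)) μ)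
        (_ : ∀ ν : ℝ, Module.End.HasEigenvalue (Matrix.toLin' (G.adjMatrix ℝ)) ν → ν ≤ μ),
        (Δ : ℝ) - μ ≥ 1 / (Fintype.card V * G.diam) ∧
        1 / ((Fintype.card V : ℝ) * G.diam) > c' / Fintype.card V ∧
        (Δ : ℝ) - μ < 2 / Fintype.card V := by
  refine ⟨c / 3, by positivity, ?_⟩
  rintro V _ _ G' _ - Δ hreg hΔ e he G rfl _ hG μ hμ hmax
  have card_e : #e.toFinset = 2 := e.card_toFinset_of_not_isDiag (G'.not_isDiag_of_mem_edgeSet he)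
  have hdeg (a : V) : (G'.deleteEdges {e}).degree a + (if a ∈ e.toFinset then 1 else 0) = Δ := by
    simpa only [Sym2.mem_toFinset] using (degree_deleteEdges_singleton_add he a).trans (hreg a)
  have nontrivial_e : e.toFinset.Nontrivial := one_lt_card_iff_nontrivial.1 (by omega)
  simpa only [card_e, Nat.cast_ofNat] using stmt18_general hG nontrivial_e
    (toFinset_ne_univ_of_connected_deleteEdges he hG) hdeg hΔ hμ hmax
end
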